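/- arXiv:2108.11491 — 7 statements merged into one kernel-verified Lean document; each statement's English description precedes it below -/
import Mathlib

section
/- Let U be an open subset of the Euclidean space E = EuclideanSpace ℝ (Fin n) and let V ⊆ E be an open set with V ∩ frontier U ≠ ∅. Then there exists a point x ∈ V ∩ frontier U such that the formal tangent space 𝒯ₓ(frontier U) is a proper submodule of E (i.e. 𝒯ₓ(frontier U) ≠ ⊤). -/
/-- The formal tangent space of a subset `S` of a real normed space at a point `x`:
the span of all derivatives at `0` of smooth curves through `x` lying in `S`. -/
def formalTangent {E : Type*} [NormedAddCommGroup E] [NormedSpace ℝ E]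
    (S : Set E) (x : E) : Submodule ℝ E :=
  Submodule.span ℝ
    {v : E | ∃ γ : ℝ → E, ContDiff ℝ (⊤ : ℕ∞) γ ∧ γ 0 = x ∧ Set.range γ ⊆ S ∧ deriv γ 0 = v}

theorem stmt0 {n : ℕ} (U V : Set (EuclideanSpace ℝ (Fin n)))
    (hU : IsOpen U) (hV : IsOpen V) (hne : (V ∩ frontier U).Nonempty) :
    ∃ x ∈ V ∩ frontier U, formalTangent (frontier U) x ≠ ⊤ := by
  obtain ⟨y, hyV, hyF⟩ := hne
  obtain ⟨ε, hε, hball⟩ := Metric.isOpen_iff.1 hV y hyV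
  obtain ⟨u, huU, hu⟩ := Metric.mem_closure_iff.1 (frontier_subset_closure hyF) (ε / 2) (half_pos hε)
  obtain ⟨x, hxF, hx⟩ := (isClosed_frontier (s := U)).exists_infDist_eq_dist ⟨y, hyF⟩ u
  have hmin : ∀ z ∈ frontier U, dist u x ≤ dist u z := fun z hz => by
    rw [← hx]
    exact Metric.infDist_le_dist_of_mem hz
  have hxV : x ∈ V := by
    apply hball
    rw [Metric.mem_ball]
    have h1 := hmin y hyF
    have h2 := dist_triangle x u y
    rw [dist_comm x u] at h2
    rw [dist_comm y u] at hu
    linarith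
  have hne : x - u ≠ 0 := by
    intro h
    rw [sub_eq_zero] at h
    rw [hU.frontier_eq] at hxF
    exact hxF.2 (h ▸ huU)
  refine ⟨x, ⟨hxV, hxF⟩, fun htop => hne ?_⟩
  have hle : formalTangent (frontier U) x ≤ (ℝ ∙ (x - u))ᗮ := by
    unfold formalTangent
    rw [Submodule.span_le]
    rintro v ⟨γ, hγ, h0, hr, rfl⟩
    simp only [SetLike.mem_coe]
    rw [Submodule.mem_orthogonal_singleton_iff_inner_right]
    have hd : HasDerivAt γ (deriv γ 0) 0 :=
      (hγ.differentiable (by simp)).differentiableAt.hasDerivAt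
    have hd2 := (hd.sub_const u).norm_sq
    have hm : IsLocalMin (fun t => ‖γ t - u‖ ^ 2) 0 := by
      refine Filter.Eventually.of_forall fun t => ?_
      have := hmin (γ t) (hr ⟨t, rfl⟩)
      rw [dist_comm u, dist_comm u, dist_eq_norm, dist_eq_norm] at this
      simp only [h0]
      gcongr
    have := hm.hasDerivAt_eq_zero hd2
    rw [h0] at this
    linarith
  rw [htop] at hle
  have := hle (Submodule.mem_top (x := x - u))
  rw [Submodule.mem_orthogonal_singleton_iff_inner_right] at this
  exact inner_self_eq_zero.1 this
end

section
/- Let E be a real normed space, and let φ, ψ : E → E be smooth maps (ContDiff ℝ ⊤) with ψ ∘ φ = id and φ ∘ ψ = id. Let S ⊆ E satisfy φ '' S = S, and let x ∈ S. Then the image of the formal tangent space under the derivative of φ satisfies Submodule.map (fderiv ℝ φ x) (𝒯ₓS) = 𝒯_{φ x}S; in particular fderiv ℝ φ x carries 𝒯ₓS isomorphically onto 𝒯_{φ x}S. -/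
theorem stmt2 {E : Type*} [NormedAddCommGroup E] [NormedSpace ℝ E]
    (φ ψ : E → E) (hφ : ContDiff ℝ (⊤ : ℕ∞) φ) (hψ : ContDiff ℝ (⊤ : ℕ∞) ψ)
    (hψφ : ψ ∘ φ = id) (hφψ : φ ∘ ψ = id)
    (S : Set E) (hS : φ '' S = S) (x : E) (hx : x ∈ S) :
    Submodule.map (fderiv ℝ φ x : E →ₗ[ℝ] E) (formalTangent S x) = formalTangent S (φ x) := by
  have hl : ∀ y, ψ (φ y) = y := fun y => congrFun hψφ y
  have hr : ∀ y, φ (ψ y) = y := fun y => congrFun hφψ y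
  have hφS : ∀ y ∈ S, φ y ∈ S := fun y hy => hS ▸ Set.mem_image_of_mem φ hy
  have hψS : ∀ y ∈ S, ψ y ∈ S := by
    intro y hy
    rw [← hS] at hy
    obtain ⟨z, hz, rfl⟩ := hy
    rw [hl]
    exact hz
  have hd : Differentiable ℝ φ := hφ.differentiable (by simp)
  have key : ∀ γ : ℝ → E, ContDiff ℝ (⊤ : ℕ∞) γ → γ 0 = x →
      deriv (φ ∘ γ) 0 = fderiv ℝ φ x (deriv γ 0) := by
    intro γ hγ h0
    have hg : DifferentiableAt ℝ γ 0 := (hγ.differentiable (by simp)) 0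
    rw [fderiv_comp_deriv (0 : ℝ) (hd _) hg, h0]
  unfold formalTangent
  rw [Submodule.map_span]
  congr 1
  ext v
  constructor
  · rintro ⟨w, ⟨γ, hγ, h0, hR, rfl⟩, rfl⟩
    refine ⟨φ ∘ γ, hφ.comp hγ, by simp [h0], ?_, key γ hγ h0⟩
    rintro _ ⟨t, rfl⟩
    exact hφS _ (hR ⟨t, rfl⟩)
  · rintro ⟨γ, hγ, h0, hR, rfl⟩
    have hc : φ ∘ (ψ ∘ γ) = γ := by
      funext t
      exact hr (γ t)
    have h0' : (ψ ∘ γ) 0 = x := by simp [h0, hl]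
    refine ⟨deriv (ψ ∘ γ) 0, ⟨ψ ∘ γ, hψ.comp hγ, h0', ?_, rfl⟩, ?_⟩
    · rintro _ ⟨t, rfl⟩
      exact hψS _ (hR ⟨t, rfl⟩)
    · have h := key (ψ ∘ γ) (hψ.comp hγ) h0'
      rw [hc] at h
      exact h.symm
end

section
/- Let E and F be real normed spaces, S ⊆ E, x ∈ S and v ∈ F. Then the formal tangent space of the product set satisfies 𝒯_{(x,v)}(S ×ˢ (Set.univ : Set F)) = (𝒯ₓS).prod ⊤, i.e. it equals the product of the formal tangent space of S at x with all of F. -/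
theorem stmt4 {E F : Type*} [NormedAddCommGroup E] [NormedSpace ℝ E]
    [NormedAddCommGroup F] [NormedSpace ℝ F]
    (S : Set E) (x : E) (hx : x ∈ S) (v : F) :
    formalTangent (S ×ˢ (Set.univ : Set F)) (x, v)
      = (formalTangent S x).prod (⊤ : Submodule ℝ F) := by
  apply le_antisymm
  · refine Submodule.span_le.2 ?_
    rintro w ⟨γ, hγ, h0, hr, rfl⟩
    have hd : HasDerivAt γ (deriv γ 0) 0 :=
      (hγ.differentiable (by simp) 0).hasDerivAt
    refine Submodule.mem_prod.2 ⟨Submodule.subset_span ⟨fun t => (γ t).1, hγ.fst, ?_, ?_, ?_⟩, trivial⟩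
    · simp [h0]
    · rintro _ ⟨t, rfl⟩
      exact (hr ⟨t, rfl⟩).1
    · exact ((ContinuousLinearMap.fst ℝ E F).hasFDerivAt.comp_hasDerivAt 0 hd).deriv
  · rintro ⟨a, b⟩ hab
    have ha : a ∈ formalTangent S x := (Submodule.mem_prod.1 hab).1
    have h1 : formalTangent S x ≤
        (formalTangent (S ×ˢ (Set.univ : Set F)) (x, v)).comap (LinearMap.inl ℝ E F) := by
      refine Submodule.span_le.2 ?_
      rintro w ⟨γ, hγ, h0, hr, rfl⟩
      have hd : HasDerivAt γ (deriv γ 0) 0 :=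
        (hγ.differentiable (by simp) 0).hasDerivAt
      refine Submodule.subset_span ⟨fun t => (γ t, v), hγ.prodMk contDiff_const, ?_, ?_, ?_⟩
      · simp [h0]
      · rintro _ ⟨t, rfl⟩
        exact ⟨hr ⟨t, rfl⟩, trivial⟩
      · exact (hd.prodMk (hasDerivAt_const 0 v)).deriv
    have h2 : ((0 : E), b) ∈ formalTangent (S ×ˢ (Set.univ : Set F)) (x, v) := by
      refine Submodule.subset_span ⟨fun t => (x, v + t • b), ?_, ?_, ?_, ?_⟩
      · fun_prop
      · simp
      · rintro _ ⟨t, rfl⟩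
        exact ⟨hx, trivial⟩
      · have hb : HasDerivAt (fun t : ℝ => v + t • b) b 0 := by
          simpa using ((hasDerivAt_id (0 : ℝ)).smul_const b).const_add v
        exact ((hasDerivAt_const (0 : ℝ) x).prodMk hb).deriv
    have h3 := Submodule.add_mem _ (Submodule.mem_comap.1 (h1 ha)) h2
    simpa using h3
end

section
/- Let X be a topological space and A : X → Matrix (Fin m) (Fin k) ℝ a continuous map. Then the set of points x ∈ X at which the rank function y ↦ (A y).rank is locally constant (i.e. there is a neighbourhood N of x with (A y).rank = (A x).rank for all y ∈ N) is open and dense in X. -/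
theorem rank_lsc_aux {X : Type*} [TopologicalSpace X] {m k : ℕ}
    (A : X → Matrix (Fin m) (Fin k) ℝ) (hA : Continuous A) (x : X) :
    ∀ᶠ y in nhds x, (A x).rank ≤ (A y).rank := by
  obtain ⟨κ, a, ha, hsp, hli⟩ := exists_linearIndependent' ℝ (fun i => A x i)
  haveI : Finite κ := Finite.of_injective a ha
  haveI : Fintype κ := Fintype.ofFinite κ
  have hx : (A x).rank = Fintype.card κ := by
    rw [Matrix.rank_eq_finrank_span_row, ← finrank_span_eq_card hli, hsp]
    rfl
  have hc : Continuous (fun y => (fun i => A y (a i) : κ → Fin k → ℝ)) :=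
    continuous_pi fun i => (continuous_apply (a i)).comp hA
  have ho := hc.continuousAt.eventually (hli.eventually)
  filter_upwards [ho] with y hy
  rw [hx, Matrix.rank_eq_finrank_span_row, ← finrank_span_eq_card hy]
  apply Submodule.finrank_mono
  apply Submodule.span_mono
  rintro _ ⟨i, rfl⟩
  exact ⟨a i, rfl⟩

theorem stmt5 {X : Type*} [TopologicalSpace X] {m k : ℕ}
    (A : X → Matrix (Fin m) (Fin k) ℝ) (hA : Continuous A) :
    IsOpen {x : X | ∃ N ∈ nhds x, ∀ y ∈ N, (A y).rank = (A x).rank} ∧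
    Dense {x : X | ∃ N ∈ nhds x, ∀ y ∈ N, (A y).rank = (A x).rank} := by
  constructor
  · rw [isOpen_iff_mem_nhds]
    rintro x ⟨N, hN, h⟩
    obtain ⟨U, hUN, hU, hxU⟩ := mem_nhds_iff.1 hN
    refine Filter.mem_of_superset (hU.mem_nhds hxU) fun y hy => ?_
    exact ⟨U, hU.mem_nhds hy, fun z hz => (h z (hUN hz)).trans (h y (hUN hy)).symm⟩
  · rw [dense_iff_inter_open]
    intro U hU hne
    have hfin : ((fun x => (A x).rank) '' U).Finite := by
      refine (Set.finite_Iic m).subset ?_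
      rintro _ ⟨x, _, rfl⟩
      simpa using (A x).rank_le_height
    obtain ⟨x, hxU, hx⟩ := Set.exists_max_image _ id hfin (hne.image _) |>.elim
      (fun r hr => by
        obtain ⟨⟨x, hxU, rfl⟩, h⟩ := hr
        exact (⟨x, hxU, fun y hy => h _ ⟨y, hy, rfl⟩⟩ :
          ∃ x ∈ U, ∀ y ∈ U, (A y).rank ≤ (A x).rank))
    refine ⟨x, hxU, _, Filter.inter_mem (hU.mem_nhds hxU) (rank_lsc_aux A hA x), ?_⟩
    rintro y ⟨hy, hy'⟩
    exact le_antisymm (hx y hy) hy'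
end

section
/- Let π be a smooth Poisson bivector field on ℝⁿ. Then its linearization πlin, defined by πlin (x, v) = Matrix.fromBlocks 0 (π x) (-(π x)ᵀ) (fun i j => fderiv ℝ (fun z => π z i j) x v) and viewed as a map (Fin n → ℝ) × (Fin n → ℝ) → Matrix (Fin n ⊕ Fin n) (Fin n ⊕ Fin n) ℝ, is itself a smooth Poisson bivector field on ℝⁿ × ℝⁿ: πlin (x,v) is skew-symmetric for every (x, v), and πlin satisfies the Jacobi identity, where partial derivatives are taken with respect to the 2n coordinates of (x, v) (indexed by Fin n ⊕ Fin n). -/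
open scoped Matrix

/-- The linearization of a bivector field `π` on `ℝⁿ` around the diagonal:
a bivector field on `ℝⁿ × ℝⁿ`, indexed by `Fin n ⊕ Fin n`. -/
noncomputable def pilin {n : ℕ} (π : (Fin n → ℝ) → Matrix (Fin n) (Fin n) ℝ)
    (p : (Fin n → ℝ) × (Fin n → ℝ)) : Matrix (Fin n ⊕ Fin n) (Fin n ⊕ Fin n) ℝ :=
  Matrix.fromBlocks 0 (π p.1) (-(π p.1)ᵀ)
    (Matrix.of fun i j => fderiv ℝ (fun z => π z i j) p.1 p.2)

/-- The standard basis vector of `(Fin n → ℝ) × (Fin n → ℝ)` indexed by `Fin n ⊕ Fin n`. -/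
noncomputable def basisVec {n : ℕ} (l : Fin n ⊕ Fin n) : (Fin n → ℝ) × (Fin n → ℝ) :=
  Sum.elim (fun i => (Pi.single i 1, 0)) (fun i => (0, Pi.single i 1)) l

theorem aux_fst {n : ℕ} (f : (Fin n → ℝ) → ℝ) (hf : ContDiff ℝ (⊤ : ℕ∞) f)
    (p w : (Fin n → ℝ) × (Fin n → ℝ)) :
    fderiv ℝ (fun q : (Fin n → ℝ) × (Fin n → ℝ) => f q.1) p w = fderiv ℝ f p.1 w.1 := by
  have hd : HasFDerivAt f (fderiv ℝ f p.1) p.1 :=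
    (hf.differentiable (by simp) p.1).hasFDerivAt
  have h := hd.comp p (hasFDerivAt_fst (𝕜 := ℝ) (p := p))
  have h2 : fderiv ℝ (fun q : (Fin n → ℝ) × (Fin n → ℝ) => f q.1) p = _ := h.fderiv
  rw [h2]; rfl

theorem aux_cd {n : ℕ} (f : (Fin n → ℝ) → ℝ) (hf : ContDiff ℝ (⊤ : ℕ∞) f) :
    ContDiff ℝ (⊤ : ℕ∞) (fderiv ℝ f) :=
  hf.fderiv_right (by simp)

theorem aux_snd {n : ℕ} (f : (Fin n → ℝ) → ℝ) (hf : ContDiff ℝ (⊤ : ℕ∞) f)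
    (p w : (Fin n → ℝ) × (Fin n → ℝ)) :
    fderiv ℝ (fun q : (Fin n → ℝ) × (Fin n → ℝ) => fderiv ℝ f q.1 q.2) p w
      = fderiv ℝ (fderiv ℝ f) p.1 w.1 p.2 + fderiv ℝ f p.1 w.2 := by
  have hd : HasFDerivAt (fderiv ℝ f) (fderiv ℝ (fderiv ℝ f) p.1) p.1 :=
    ((aux_cd f hf).differentiable (by simp) p.1).hasFDerivAt
  have h := hd.comp p (hasFDerivAt_fst (𝕜 := ℝ) (p := p))
  have h3 := h.clm_apply (hasFDerivAt_snd (𝕜 := ℝ) (p := p))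
  have h2 : fderiv ℝ (fun q : (Fin n → ℝ) × (Fin n → ℝ) => fderiv ℝ f q.1 q.2) p = _ := h3.fderiv
  rw [h2]; simp [add_comm]

theorem aux_symm {n : ℕ} (f : (Fin n → ℝ) → ℝ) (hf : ContDiff ℝ (⊤ : ℕ∞) f)
    (x v w : Fin n → ℝ) :
    fderiv ℝ (fderiv ℝ f) x v w = fderiv ℝ (fderiv ℝ f) x w v :=
  (hf.contDiffAt.isSymmSndFDerivAt (by rw [minSmoothness_of_isRCLikeNormedField]; exact WithTop.coe_le_coe.2 (le_top : (2 : ℕ∞) ≤ ⊤))).eq v w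

theorem aux_term {n : ℕ} (f g : (Fin n → ℝ) → ℝ) (hf : ContDiff ℝ (⊤ : ℕ∞) f)
    (hg : ContDiff ℝ (⊤ : ℕ∞) g) (x v e : Fin n → ℝ) :
    HasDerivAt (fun t : ℝ => f (x + t • v) * fderiv ℝ g (x + t • v) e)
      (fderiv ℝ f x v * fderiv ℝ g x e + f x * fderiv ℝ (fderiv ℝ g) x e v) 0 := by
  have hl : HasDerivAt (fun t : ℝ => x + t • v) v 0 := by
    simpa using ((hasDerivAt_id (0 : ℝ)).smul_const v).const_add x
  have h1 : HasFDerivAt f (fderiv ℝ f x) (x + (0 : ℝ) • v) := by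
    simpa using (hf.differentiable (by simp) x).hasFDerivAt
  have h2 : HasFDerivAt (fderiv ℝ g) (fderiv ℝ (fderiv ℝ g) x) (x + (0 : ℝ) • v) := by
    simpa using ((aux_cd g hg).differentiable (by simp) x).hasFDerivAt
  have h3 : HasDerivAt (fun t : ℝ => f (x + t • v)) (fderiv ℝ f x v) 0 :=
    h1.comp_hasDerivAt (0 : ℝ) hl
  have h4 : HasDerivAt (fun t : ℝ => fderiv ℝ g (x + t • v)) (fderiv ℝ (fderiv ℝ g) x v) 0 :=
    h2.comp_hasDerivAt (0 : ℝ) hl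
  have h6 : HasDerivAt (fun t : ℝ => fderiv ℝ g (x + t • v) e)
      (fderiv ℝ (fderiv ℝ g) x v e) 0 := by
    have := h4.clm_apply (hasDerivAt_const (0 : ℝ) e)
    rwa [map_zero, add_zero] at this
  have h5 := h3.fun_mul h6
  rw [zero_smul, add_zero] at h5
  rw [aux_symm g hg x e v]
  exact h5

theorem stmt10 {n : ℕ} (π : (Fin n → ℝ) → Matrix (Fin n) (Fin n) ℝ)
    (hsmooth : ∀ i j, ContDiff ℝ (⊤ : ℕ∞) fun x => π x i j)
    (hskew : ∀ x, (π x)ᵀ = -(π x))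
    (hjac : ∀ (x : Fin n → ℝ) (i j k : Fin n),
      ∑ l, (π x l i * fderiv ℝ (fun z => π z j k) x (Pi.single l 1)
        + π x l j * fderiv ℝ (fun z => π z k i) x (Pi.single l 1)
        + π x l k * fderiv ℝ (fun z => π z i j) x (Pi.single l 1)) = 0) :
    (∀ i j, ContDiff ℝ (⊤ : ℕ∞) fun p => pilin π p i j) ∧
    (∀ p, (pilin π p)ᵀ = -(pilin π p)) ∧
    (∀ (p : (Fin n → ℝ) × (Fin n → ℝ)) (i j k : Fin n ⊕ Fin n),
      ∑ l, (pilin π p l i * fderiv ℝ (fun q => pilin π q j k) p (basisVec l)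
        + pilin π p l j * fderiv ℝ (fun q => pilin π q k i) p (basisVec l)
        + pilin π p l k * fderiv ℝ (fun q => pilin π q i j) p (basisVec l)) = 0) := by
  have sk : ∀ x i j, π x i j = - π x j i := fun x i j => by
    have := congrFun (congrFun (hskew x) j) i
    simpa using this
  have ell : ∀ p i j, pilin π p (Sum.inl i) (Sum.inl j) = 0 := fun p i j => by simp [pilin]
  have elr : ∀ p i j, pilin π p (Sum.inl i) (Sum.inr j) = π p.1 i j :=
    fun p i j => by simp [pilin]
  have erl : ∀ p i j, pilin π p (Sum.inr i) (Sum.inl j) = π p.1 i j :=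
    fun p i j => by simp [pilin, sk p.1 i j]
  have err : ∀ p i j, pilin π p (Sum.inr i) (Sum.inr j)
      = fderiv ℝ (fun z => π z i j) p.1 p.2 := fun p i j => by simp [pilin]
  have dsk : ∀ x i j, fderiv ℝ (fun z => π z i j) x = - fderiv ℝ (fun z => π z j i) x := by
    intro x i j
    rw [← fderiv_fun_neg]
    congr 1
    funext z
    exact sk z i j
  refine ⟨?_, ?_, ?_⟩
  · rintro (i | i) (j | j)
    · simp only [ell]; exact contDiff_const
    · simp only [elr]; exact (hsmooth i j).comp contDiff_fst
    · simp only [erl]; exact (hsmooth i j).comp contDiff_fst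
    · simp only [err]
      exact ((aux_cd _ (hsmooth i j)).comp contDiff_fst).clm_apply contDiff_snd
  · intro p
    ext (i | i) (j | j)
    · simp [ell]
    · simp [elr, erl, sk p.1 j i]
    · simp [elr, erl, sk p.1 j i]
    · simp [err, dsk p.1 j i]
  · intro p
    have b1 : ∀ l : Fin n, basisVec (Sum.inl l) = ((Pi.single l 1, 0) : (Fin n → ℝ) × (Fin n → ℝ)) :=
      fun l => rfl
    have b2 : ∀ l : Fin n, basisVec (Sum.inr l) = ((0, Pi.single l 1) : (Fin n → ℝ) × (Fin n → ℝ)) :=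
      fun l => rfl
    have d1 : ∀ i j w, fderiv ℝ (fun q : (Fin n → ℝ) × (Fin n → ℝ) => π q.1 i j) p w
      = fderiv ℝ (fun z => π z i j) p.1 w.1 := fun i j w => aux_fst _ (hsmooth i j) p w
    have d2 := fun i j w => aux_snd _ (hsmooth i j) p w
    rintro (i | i) (j | j) (k | k) <;>
      simp only [Fintype.sum_sum_type, ell, elr, erl, err, d1, d2, b1, b2, map_zero, mul_zero,
        zero_mul, add_zero, zero_add, fderiv_fun_const, Pi.zero_apply, Finset.sum_const_zero,
        _root_.zero_apply, ← Finset.sum_add_distrib]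
    · refine Eq.trans ?_ (hjac p.1 i j k); exact Finset.sum_congr rfl fun l _ => by ring
    · refine Eq.trans ?_ (hjac p.1 i j k); exact Finset.sum_congr rfl fun l _ => by ring
    · refine Eq.trans ?_ (hjac p.1 i j k); exact Finset.sum_congr rfl fun l _ => by ring
    · have H := HasDerivAt.fun_sum (u := Finset.univ) fun (l : Fin n) _ =>
        ((aux_term _ _ (hsmooth l i) (hsmooth j k) p.1 p.2 (Pi.single l 1)).add
          (aux_term _ _ (hsmooth l j) (hsmooth k i) p.1 p.2 (Pi.single l 1))).add
          (aux_term _ _ (hsmooth l k) (hsmooth i j) p.1 p.2 (Pi.single l 1))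
      have H0 : HasDerivAt (fun _ : ℝ => (0 : ℝ)) _ 0 :=
        H.congr_of_eventuallyEq (Filter.Eventually.of_forall fun t =>
          (hjac (p.1 + t • p.2) i j k).symm)
      rw [← H0.unique (hasDerivAt_const (0 : ℝ) (0 : ℝ))]
      exact Finset.sum_congr rfl fun l _ => by ring
end

section
/- Let π be a smooth Poisson bivector field on ℝⁿ, with product structure Π (x, y) = Matrix.fromBlocks (π x) 0 0 (-(π y)) on ℝⁿ × ℝⁿ and linearization πlin (x, v) = Matrix.fromBlocks 0 (π x) (-(π x)ᵀ) (fun i j => fderiv ℝ (fun z => π z i j) x v). Suppose there exist open sets W₁, W₂ ⊆ (Fin n → ℝ) × (Fin n → ℝ) with (x, 0) ∈ W₁ for every x, and smooth maps φ, ψ : (Fin n → ℝ) × (Fin n → ℝ) → (Fin n → ℝ) × (Fin n → ℝ) such that ψ ∘ φ agrees with the identity on W₁, φ ∘ ψ agrees with the identity on W₂, φ '' W₁ = W₂, φ (x, 0) = (x, x) for every x, and φ is a Poisson map from πlin to Π on W₁, i.e. for every p ∈ W₁, J p * πlin p * (J p)ᵀ = Π (φ p), where J p ∈ Matrix (Fin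 n ⊕ Fin n) (Fin n ⊕ Fin n) ℝ is the matrix of fderiv ℝ φ p under the identification (Fin n → ℝ) × (Fin n → ℝ) ≅ (Fin n ⊕ Fin n → ℝ). Then π is regular: the function x ↦ (π x).rank is locally constant on ℝⁿ. -/
open scoped Matrix

/-- The product Poisson structure `π × (-π)` on `ℝⁿ × ℝⁿ`. -/
noncomputable def Pprod {n : ℕ} (π : (Fin n → ℝ) → Matrix (Fin n) (Fin n) ℝ)
    (p : (Fin n → ℝ) × (Fin n → ℝ)) : Matrix (Fin n ⊕ Fin n) (Fin n ⊕ Fin n) ℝ :=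
  Matrix.fromBlocks (π p.1) 0 0 (-(π p.2))

/-- The Jacobian matrix of a map `φ : ℝⁿ × ℝⁿ → ℝⁿ × ℝⁿ` at `p`, under the identification
`(Fin n → ℝ) × (Fin n → ℝ) ≅ (Fin n ⊕ Fin n → ℝ)`. -/
noncomputable def Jmat {n : ℕ}
    (φ : (Fin n → ℝ) × (Fin n → ℝ) → (Fin n → ℝ) × (Fin n → ℝ))
    (p : (Fin n → ℝ) × (Fin n → ℝ)) : Matrix (Fin n ⊕ Fin n) (Fin n ⊕ Fin n) ℝ :=
  Matrix.of fun l m =>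
    Sum.elim (fun i => (fderiv ℝ φ p (basisVec m)).1 i)
      (fun i => (fderiv ℝ φ p (basisVec m)).2 i) l

open scoped ContDiff

attribute [local instance] Matrix.linftyOpNormedRing Matrix.linftyOpNormedAlgebra

lemma alg_core {R : Type*} [Ring R] (C : Subring R) (p A B A2 B2 Q : R)
    (hA : A ∈ C) (hB2 : B2 ∈ C) (hA2 : A2 ∈ C) (hB : B ∈ C)
    (h1 : A * p + p * B2 = 0) (h2 : B * p + p * A2 = 0)
    (r1 : ∃ E ∈ C, ∃ F ∈ C, A * Q + Q * B2 = E * p + p * F)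
    (r2 : ∃ E ∈ C, ∃ F ∈ C, B * Q + Q * A2 = E * p + p * F)
    (r3 : ∃ E ∈ C, ∃ F ∈ C, A * Q + Q * A2 - Q = E * p + p * F)
    (r4 : ∃ E ∈ C, ∃ F ∈ C, A * Q * B2 = E * p + p * F)
    (r5 : ∃ E ∈ C, ∃ F ∈ C, B * Q * A2 = E * p + p * F) :
    ∃ E ∈ C, ∃ F ∈ C, Q = E * p + p * F := by
  let S : AddSubgroup R :=
    { carrier := {q | ∃ E ∈ C, ∃ F ∈ C, q = E * p + p * F}
      add_mem' := by
        rintro a b ⟨E, hE, F, hF, rfl⟩ ⟨E', hE', F', hF', rfl⟩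
        exact ⟨E + E', C.add_mem hE hE', F + F', C.add_mem hF hF', by noncomm_ring⟩
      zero_mem' := ⟨0, C.zero_mem, 0, C.zero_mem, by simp⟩
      neg_mem' := by
        rintro a ⟨E, hE, F, hF, rfl⟩
        exact ⟨-E, C.neg_mem hE, -F, C.neg_mem hF, by noncomm_ring⟩ }
  have h1' : A * p = -(p * B2) := eq_neg_of_add_eq_zero_left h1
  have h2' : p * A2 = -(B * p) := eq_neg_of_add_eq_zero_right h2
  have LA : ∀ q ∈ S, A * q ∈ S := by
    rintro a ⟨E, hE, F, hF, rfl⟩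
    refine ⟨A * E, C.mul_mem hA hE, -(B2 * F), C.neg_mem (C.mul_mem hB2 hF), ?_⟩
    rw [mul_add, ← mul_assoc A p, h1']; noncomm_ring
  have RA : ∀ q ∈ S, q * A2 ∈ S := by
    rintro a ⟨E, hE, F, hF, rfl⟩
    refine ⟨- (E * B), C.neg_mem (C.mul_mem hE hB), F * A2, C.mul_mem hF hA2, ?_⟩
    rw [add_mul, mul_assoc E p, h2']; noncomm_ring
  change A * Q + Q * B2 ∈ S at r1
  change B * Q + Q * A2 ∈ S at r2
  change A * Q + Q * A2 - Q ∈ S at r3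
  change A * Q * B2 ∈ S at r4
  change B * Q * A2 ∈ S at r5
  change Q ∈ S
  have t1 : A * (A * Q) ∈ S := by
    have := S.sub_mem (LA _ r1) r4
    convert this using 1; noncomm_ring
  have t2 : Q * A2 * A2 ∈ S := by
    have := S.sub_mem (RA _ r2) r5
    convert this using 1; noncomm_ring
  have t3 : Q - A * Q - A * Q + A * (A * Q) ∈ S := by
    have := S.add_mem (S.sub_mem (S.sub_mem t2 (RA _ r3)) r3) (LA _ r3)
    convert this using 1; noncomm_ring
  have u1 : Q - A * Q - A * Q ∈ S := by
    have := S.sub_mem t3 t1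
    convert this using 1; noncomm_ring
  have u2 : A * Q ∈ S := by
    have := S.add_mem (LA _ u1) (S.add_mem t1 t1)
    convert this using 1; noncomm_ring
  have := S.add_mem u1 (S.add_mem u2 u2)
  convert this using 1; noncomm_ring

section
variable {V : Type*} [NormedAddCommGroup V] [NormedSpace ℝ V] {n : ℕ}

noncomputable def DD {V : Type*} [NormedAddCommGroup V] [NormedSpace ℝ V] {n : ℕ}
    (M : V → Matrix (Fin n) (Fin n) ℝ) (w p : V) : Matrix (Fin n) (Fin n) ℝ :=
  Matrix.of fun i j => fderiv ℝ (fun q => M q i j) p w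

def ES {V : Type*} [NormedAddCommGroup V] [NormedSpace ℝ V] {n : ℕ}
    (M : V → Matrix (Fin n) (Fin n) ℝ) : Prop := ∀ i j, ContDiff ℝ ∞ fun q => M q i j

lemma hasDeriv_entry {f : ℝ → Matrix (Fin n) (Fin n) ℝ} {f' : Matrix (Fin n) (Fin n) ℝ} {t : ℝ}
    (h : ∀ i j, HasDerivAt (fun s => f s i j) (f' i j) t) : HasDerivAt f f' t := by
  have h1 : ∀ i j, Filter.Tendsto (fun s => slope f t s i j) (nhdsWithin t {t}ᶜ) (nhds (f' i j)) := by
    intro i j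
    have := hasDerivAt_iff_tendsto_slope.1 (h i j)
    exact this
  refine hasDerivAt_iff_tendsto_slope.2 ?_
  exact tendsto_pi_nhds.2 fun i => tendsto_pi_nhds.2 fun j => h1 i j

lemma ES.hasDeriv {M : V → Matrix (Fin n) (Fin n) ℝ} (h : ES M) (p w : V) (t : ℝ) :
    HasDerivAt (fun s : ℝ => M (p + s • w)) (DD M w (p + t • w)) t := by
  apply hasDeriv_entry
  intro i j
  have h1 : HasFDerivAt (fun q => M q i j) _ (p + t • w) :=
    ((h i j).differentiable (by simp) _).hasFDerivAt
  have h2 : HasDerivAt (fun s : ℝ => p + s • w) w t := by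
    simpa using ((hasDerivAt_id t).smul_const w).const_add p
  exact h1.comp_hasDerivAt t h2

lemma ES.contDD {M : V → Matrix (Fin n) (Fin n) ℝ} (h : ES M) (w : V) :
    Continuous (DD M w) := by
  refine continuous_matrix fun i j => ?_
  exact ((h i j).continuous_fderiv (by simp)).clm_apply continuous_const

lemma ES.cont {M : V → Matrix (Fin n) (Fin n) ℝ} (h : ES M) : Continuous M :=
  continuous_matrix fun i j => (h i j).continuous

lemma hasDeriv_tr {f : ℝ → Matrix (Fin n) (Fin n) ℝ} {f' : Matrix (Fin n) (Fin n) ℝ} {t : ℝ}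
    (h : HasDerivAt f f' t) : HasDerivAt (fun s => (f s)ᵀ) f'ᵀ t := by
  have := hasDerivAt_iff_tendsto_slope.1 h
  refine hasDerivAt_iff_tendsto_slope.2 ?_
  refine ((continuous_id.matrix_transpose.tendsto f').comp this).congr ?_
  intro s
  ext i j
  simp [slope, Matrix.transpose_apply]
end

lemma lin_exist {X : Type*} [NormedAddCommGroup X] [NormedSpace ℝ X] [CompleteSpace X]
    (f : ℝ → X → X) (L : ℝ) (hL : 0 ≤ L) (x₀ : X) (hLx : L * (‖x₀‖ + 1) ≤ 1)
    (hlip : ∀ t ∈ Set.Icc (0 : ℝ) 1, ∀ x y, ‖f t x - f t y‖ ≤ L * ‖x - y‖)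
    (hz : ∀ t, f t 0 = 0) (hc : ∀ x, Continuous fun t => f t x) :
    ∃ α : ℝ → X, α 0 = x₀ ∧ ∀ t ∈ Set.Icc (0 : ℝ) 1,
      HasDerivWithinAt α (f t (α t)) (Set.Icc 0 1) t := by
  have H : IsPicardLindelof f (tmin := 0) (tmax := 1) ⟨0, by simp⟩ x₀ 1 0 1 ⟨L, hL⟩ := by
    refine ⟨fun t ht => ?_, fun x _ => (hc x).continuousOn, fun t ht x hx => ?_, by simp⟩
    · refine LipschitzOnWith.of_dist_le_mul fun x _ y _ => ?_
      rw [dist_eq_norm, dist_eq_norm]; exact hlip t ht x y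
    · have h1 := hlip t ht x 0
      rw [hz, sub_zero, sub_zero] at h1
      have h2 : ‖x‖ ≤ ‖x₀‖ + 1 := by
        have := mem_closedBall_iff_norm.1 hx
        have h3 := norm_le_norm_add_norm_sub x₀ x
        rw [norm_sub_rev] at h3
        simp at this; linarith
      calc _ ≤ _ := h1
        _ ≤ L * (‖x₀‖ + 1) := by gcongr
        _ ≤ _ := by simpa using hLx
  exact H.exists_eq_forall_mem_Icc_hasDerivWithinAt₀

lemma ode_core {𝔸 : Type*} [NormedRing 𝔸] [NormedAlgebra ℝ 𝔸] [CompleteSpace 𝔸]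
    (X E F : ℝ → 𝔸) (L : ℝ) (hL : 0 ≤ L) (hL1 : L * (‖(1 : 𝔸)‖ + 1) ≤ 1)
    (hE : Continuous E) (hF : Continuous F)
    (hEL : ∀ t ∈ Set.Icc (0 : ℝ) 1, ‖E t‖ ≤ L) (hFL : ∀ t ∈ Set.Icc (0 : ℝ) 1, ‖F t‖ ≤ L)
    (hX : ∀ t, HasDerivAt X (E t * X t + X t * F t) t) :
    ∃ g h : 𝔸, X 1 = g * X 0 * h := by
  obtain ⟨g, g0, hg⟩ := lin_exist (fun t x => E t * x) L hL 1 hL1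
    (fun t ht x y => by
      rw [← mul_sub]; exact (norm_mul_le _ _).trans (by gcongr; exact hEL t ht))
    (by simp) (fun x => by fun_prop)
  obtain ⟨h, h0, hh⟩ := lin_exist (fun t x => x * F t) L hL 1 hL1
    (fun t ht x y => by
      rw [← sub_mul, mul_comm L]; exact (norm_mul_le _ _).trans (by gcongr; exact hFL t ht))
    (by simp) (fun x => by fun_prop)
  have hY : ∀ t ∈ Set.Icc (0 : ℝ) 1, HasDerivWithinAt (fun t => g t * X 0 * h t)
      (E t * (g t * X 0 * h t) + (g t * X 0 * h t) * F t) (Set.Icc 0 1) t := by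
    intro t ht
    have := ((hg t ht).mul_const (X 0)).mul (hh t ht)
    refine this.congr_deriv ?_
    simp only [mul_assoc]
  refine ⟨g 1, h 1, ?_⟩
  have key := ODE_solution_unique_of_mem_Icc_right (a := (0:ℝ)) (b := 1) (f := X)
    (g := fun t => g t * X 0 * h t) (K := ⟨2 * L, by positivity⟩)
    (v := fun t x => E t * x + x * F t) (s := fun _ => Set.univ)
    (fun t ht => ?_) (fun t _ => (hX t).continuousAt.continuousWithinAt)
    (fun t _ => (hX t).hasDerivWithinAt) (fun _ _ => trivial)
    (fun t ht => (hY t ht).continuousWithinAt)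
    (fun t ht => ?_) (fun _ _ => trivial) (by simp [g0, h0])
  · exact key (by simp)
  · refine LipschitzOnWith.of_dist_le_mul fun x _ y _ => ?_
    rw [dist_eq_norm, dist_eq_norm]
    have ht' : t ∈ Set.Icc (0:ℝ) 1 := ⟨ht.1, ht.2.le⟩
    have : E t * x + x * F t - (E t * y + y * F t) = E t * (x - y) + (x - y) * F t := by
      noncomm_ring
    rw [this]
    have a1 : ‖E t * (x - y)‖ ≤ L * ‖x - y‖ :=
      (norm_mul_le _ _).trans (by gcongr; exact hEL t ht')
    have a2 : ‖(x - y) * F t‖ ≤ ‖x - y‖ * L :=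
      (norm_mul_le _ _).trans (by gcongr; exact hFL t ht')
    have := norm_add_le (E t * (x - y)) ((x - y) * F t)
    change _ ≤ 2 * L * ‖x - y‖
    linarith
  · exact ((hY t ⟨ht.1, ht.2.le⟩).mono_of_mem_nhdsWithin (Icc_mem_nhdsGE_of_mem ht))

section
variable {n : ℕ} (π : (Fin n → ℝ) → Matrix (Fin n) (Fin n) ℝ)
    (hsmooth : ∀ i j, ContDiff ℝ (⊤ : ℕ∞) fun x => π x i j)
    (hskew : ∀ x, (π x)ᵀ = -(π x))
    (W₁ : Set ((Fin n → ℝ) × (Fin n → ℝ)))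
    (hW₁ : IsOpen W₁)
    (hzero : ∀ x : Fin n → ℝ, (x, (0 : Fin n → ℝ)) ∈ W₁)
    (φ : (Fin n → ℝ) × (Fin n → ℝ) → (Fin n → ℝ) × (Fin n → ℝ))
    (hφ : ContDiff ℝ (⊤ : ℕ∞) φ)
    (hdiag : ∀ x : Fin n → ℝ, φ (x, 0) = (x, x))
    (hpoisson : ∀ p ∈ W₁, Jmat φ p * pilin π p * (Jmat φ p)ᵀ = Pprod π (φ p))

lemma Jsmooth {n : ℕ} (φ : (Fin n → ℝ) × (Fin n → ℝ) → (Fin n → ℝ) × (Fin n → ℝ))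
    (hφ : ContDiff ℝ (⊤ : ℕ∞) φ) (l m : Fin n ⊕ Fin n) :
    ContDiff ℝ ∞ fun p => Jmat φ p l m := by
  have h1 : ContDiff ℝ ∞ fun p => fderiv ℝ φ p (basisVec m) :=
    (hφ.fderiv_right (m := ∞) (by simp)).clm_apply contDiff_const
  rcases l with i | i
  · exact contDiff_pi.1 h1.fst i
  · exact contDiff_pi.1 h1.snd i

lemma Jdiag {n : ℕ} (φ : (Fin n → ℝ) × (Fin n → ℝ) → (Fin n → ℝ) × (Fin n → ℝ))
    (hφ : ContDiff ℝ (⊤ : ℕ∞) φ) (hdiag : ∀ x : Fin n → ℝ, φ (x, 0) = (x, x)) (x : Fin n → ℝ) :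
    (Jmat φ (x, 0)).toBlocks₁₁ = 1 ∧ (Jmat φ (x, 0)).toBlocks₂₁ = 1 := by
  have h : ∀ u : Fin n → ℝ, fderiv ℝ φ (x, 0) (u, 0) = (u, u) := by
    intro u
    have h1 : HasFDerivAt φ (fderiv ℝ φ (x, 0)) (x, 0) :=
      (hφ.differentiable (by simp) _).hasFDerivAt
    have h2 : HasFDerivAt (fun y : Fin n → ℝ => (y, (0 : Fin n → ℝ)))
      ((ContinuousLinearMap.id ℝ (Fin n → ℝ)).prod 0) x :=
        (hasFDerivAt_id x).prodMk (hasFDerivAt_const _ _)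
    have h3 := h1.comp x h2
    have h4 : HasFDerivAt (fun y : Fin n → ℝ => (y, y))
      ((ContinuousLinearMap.id ℝ (Fin n → ℝ)).prod (ContinuousLinearMap.id ℝ (Fin n → ℝ))) x :=
        (hasFDerivAt_id x).prodMk (hasFDerivAt_id x)
    have h5 : (φ ∘ fun y : Fin n → ℝ => (y, (0 : Fin n → ℝ))) = fun y => (y, y) := by
      funext y; exact hdiag y
    rw [h5] at h3
    have := congrArg (fun T => T u) (h3.unique h4)
    simpa using this
  constructor <;> ext i j <;>
    simp [Matrix.toBlocks₁₁, Matrix.toBlocks₂₁, Jmat, basisVec, h, Matrix.one_apply, Pi.single_apply]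

include hpoisson hskew in
lemma blocks (p) (hp : p ∈ W₁) :
    let J := Jmat φ p
    let P := π p.1
    let Q := DD π p.2 p.1
    (J.toBlocks₁₂ * P * J.toBlocks₁₁ᵀ + J.toBlocks₁₁ * P * J.toBlocks₁₂ᵀ
      + J.toBlocks₁₂ * Q * J.toBlocks₁₂ᵀ = π (φ p).1) ∧
    (J.toBlocks₁₂ * P * J.toBlocks₂₁ᵀ + J.toBlocks₁₁ * P * J.toBlocks₂₂ᵀ
      + J.toBlocks₁₂ * Q * J.toBlocks₂₂ᵀ = 0) ∧
    (J.toBlocks₂₂ * P * J.toBlocks₁₁ᵀ + J.toBlocks₂₁ * P * J.toBlocks₁₂ᵀ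
      + J.toBlocks₂₂ * Q * J.toBlocks₁₂ᵀ = 0) := by
  intro J P Q
  have h := hpoisson p hp
  change J * _ * Jᵀ = _ at h
  rw [← Matrix.fromBlocks_toBlocks J, pilin, Pprod, Matrix.fromBlocks_multiply,
    Matrix.fromBlocks_transpose, Matrix.fromBlocks_multiply, Matrix.fromBlocks_inj, hskew, neg_neg] at h
  obtain ⟨e1, e2, e3, -⟩ := h
  change (_ * 0 + _ * P) * _ + (_ * P + _ * Q) * _ = _ at e1 e2 e3
  refine ⟨?_, ?_, ?_⟩
  · rw [← e1]; noncomm_ring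
  · rw [← e2]; noncomm_ring
  · rw [← e3]; noncomm_ring

include hsmooth hskew hW₁ hzero hφ hdiag hpoisson in
lemma main_S (w : Fin n → ℝ) : ∃ E F : (Fin n → ℝ) → Matrix (Fin n) (Fin n) ℝ,
    Continuous E ∧ Continuous F ∧ ∀ x, DD π w x = E x * π x + π x * F x := by
  have hπ : ES π := hsmooth
  -- block functions
  have s11 : ES fun p => (Jmat φ p).toBlocks₁₁ := fun i j => Jsmooth φ hφ (.inl i) (.inl j)
  have s12 : ES fun p => (Jmat φ p).toBlocks₁₂ := fun i j => Jsmooth φ hφ (.inl i) (.inr j)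
  have s21 : ES fun p => (Jmat φ p).toBlocks₂₁ := fun i j => Jsmooth φ hφ (.inr i) (.inl j)
  have s22 : ES fun p => (Jmat φ p).toBlocks₂₂ := fun i j => Jsmooth φ hφ (.inr i) (.inr j)
  have hins : ContDiff ℝ ∞ fun x : Fin n → ℝ => (x, (0 : Fin n → ℝ)) :=
    contDiff_id.prodMk contDiff_const
  let A : (Fin n → ℝ) → Matrix (Fin n) (Fin n) ℝ := fun x => (Jmat φ (x, 0)).toBlocks₁₂
  let B : (Fin n → ℝ) → Matrix (Fin n) (Fin n) ℝ := fun x => (Jmat φ (x, 0)).toBlocks₂₂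
  have sA : ES A := fun i j => (Jsmooth φ hφ (.inl i) (.inr j)).comp hins
  have sB : ES B := fun i j => (Jsmooth φ hφ (.inr i) (.inr j)).comp hins
  have hD0 : ∀ x, DD π 0 x = 0 := by intro x; ext i j; simp [DD]
  have hrel : ∀ x, A x * π x + π x * (A x)ᵀ = π x ∧ A x * π x + π x * (B x)ᵀ = 0 ∧
      B x * π x + π x * (A x)ᵀ = 0 := by
    intro x
    obtain ⟨e1, e2, e3⟩ := blocks π hskew W₁ φ hpoisson (x, 0) (hzero x)
    obtain ⟨d1, d2⟩ := Jdiag φ hφ hdiag x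
    simp only [d1, d2, hD0, hdiag, Matrix.transpose_one, mul_one, one_mul, mul_zero, zero_mul,
      add_zero] at e1 e2 e3
    exact ⟨e1, e2, e3⟩
  -- derivative along the base
  have dπ := fun x => by simpa using hπ.hasDeriv x w 0
  have dA := fun x => by simpa using sA.hasDeriv x w 0
  have dB := fun x => by simpa using sB.hasDeriv x w 0
  let Q := DD π w
  have hx0 : ∀ x : Fin n → ℝ, x + (0 : ℝ) • w = x := by simp
  have q1 : ∀ x, A x * Q x + Q x * (B x)ᵀ =
      -(DD A w x) * π x + π x * -(DD B w x)ᵀ := by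
    intro x
    have h1 := ((dA x).mul (dπ x)).add ((dπ x).mul (hasDeriv_tr (dB x)))
    have h2 := h1.congr_of_eventuallyEq (f₁ := fun _ => 0)
      (Filter.Eventually.of_forall fun t => ((hrel (x + t • w)).2.1).symm)
    have h3 := h2.unique (hasDerivAt_const _ _)
    simp only [hx0] at h3
    rw [← sub_eq_zero, ← h3]
    simp only [Q]; noncomm_ring
  have q2 : ∀ x, B x * Q x + Q x * (A x)ᵀ =
      -(DD B w x) * π x + π x * -(DD A w x)ᵀ := by
    intro x
    have h1 := ((dB x).mul (dπ x)).add ((dπ x).mul (hasDeriv_tr (dA x)))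
    have h2 := h1.congr_of_eventuallyEq (f₁ := fun _ => 0)
      (Filter.Eventually.of_forall fun t => ((hrel (x + t • w)).2.2).symm)
    have h3 := h2.unique (hasDerivAt_const _ _)
    simp only [hx0] at h3
    rw [← sub_eq_zero, ← h3]
    simp only [Q]; noncomm_ring
  have q3 : ∀ x, A x * Q x + Q x * (A x)ᵀ - Q x =
      -(DD A w x) * π x + π x * -(DD A w x)ᵀ := by
    intro x
    have h1 := (((dA x).mul (dπ x)).add ((dπ x).mul (hasDeriv_tr (dA x)))).sub (dπ x)
    have h2 := h1.congr_of_eventuallyEq (f₁ := fun _ => 0)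
      (Filter.Eventually.of_forall fun t => (sub_eq_zero.2 (hrel (x + t • w)).1).symm)
    have h3 := h2.unique (hasDerivAt_const _ _)
    simp only [hx0] at h3
    rw [← sub_eq_zero, ← h3]
    simp only [Q]; noncomm_ring
  -- derivative along the fibre
  have hv0 : ∀ x : Fin n → ℝ, (x, (0 : Fin n → ℝ)) + (0 : ℝ) • ((0 : Fin n → ℝ), w) = (x, 0) := by
    simp
  have hvs : ∀ (x : Fin n → ℝ) (s : ℝ),
      (x, (0 : Fin n → ℝ)) + s • ((0 : Fin n → ℝ), w) = (x, s • w) := by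
    intro x s; simp
  have hDs : ∀ x (s : ℝ), DD π (s • w) x = s • DD π w x := by
    intro x s; ext i j; simp [DD]
  have hev : ∀ x : Fin n → ℝ, ∀ᶠ s : ℝ in nhds 0, (x, s • w) ∈ W₁ := by
    intro x
    have hc : Continuous fun s : ℝ => (x, s • w) := by fun_prop
    exact hc.continuousAt.eventually_mem (hW₁.mem_nhds (by simpa using hzero x))
  let w' : (Fin n → ℝ) × (Fin n → ℝ) := (0, w)
  let K11 := fun x : Fin n → ℝ => DD (fun p => (Jmat φ p).toBlocks₁₁) w' (x, 0)
  let K12 := fun x : Fin n → ℝ => DD (fun p => (Jmat φ p).toBlocks₁₂) w' (x, 0)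
  let K21 := fun x : Fin n → ℝ => DD (fun p => (Jmat φ p).toBlocks₂₁) w' (x, 0)
  let K22 := fun x : Fin n → ℝ => DD (fun p => (Jmat φ p).toBlocks₂₂) w' (x, 0)
  have d11 : ∀ x, HasDerivAt (fun s : ℝ => (Jmat φ (x, s • w)).toBlocks₁₁) (K11 x) 0 := by
    intro x
    have := s11.hasDeriv (x, 0) w' 0
    simp only [w', hvs, zero_smul, add_zero] at this
    exact this
  have d12 : ∀ x, HasDerivAt (fun s : ℝ => (Jmat φ (x, s • w)).toBlocks₁₂) (K12 x) 0 := by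
    intro x
    have := s12.hasDeriv (x, 0) w' 0
    simp only [w', hvs, zero_smul, add_zero] at this
    exact this
  have d21 : ∀ x, HasDerivAt (fun s : ℝ => (Jmat φ (x, s • w)).toBlocks₂₁) (K21 x) 0 := by
    intro x
    have := s21.hasDeriv (x, 0) w' 0
    simp only [w', hvs, zero_smul, add_zero] at this
    exact this
  have d22 : ∀ x, HasDerivAt (fun s : ℝ => (Jmat φ (x, s • w)).toBlocks₂₂) (K22 x) 0 := by
    intro x
    have := s22.hasDeriv (x, 0) w' 0
    simp only [w', hvs, zero_smul, add_zero] at this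
    exact this
  have dQ : ∀ x, HasDerivAt (fun s : ℝ => s • Q x) (Q x) 0 := by
    intro x
    apply hasDeriv_entry
    intro i j
    simpa using (hasDerivAt_id (0 : ℝ)).mul_const (Q x i j)
  have q4 : ∀ x, A x * Q x * (B x)ᵀ =
      (K11 x * A x - K12 x) * π x + π x * ((B x)ᵀ * (K21 x)ᵀ - (K22 x)ᵀ) := by
    intro x
    obtain ⟨e1, e2⟩ := Jdiag φ hφ hdiag x
    have h1 := ((((d12 x).mul_const (π x)).mul (hasDeriv_tr (d21 x))).add
      (((d11 x).mul_const (π x)).mul (hasDeriv_tr (d22 x)))).add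
      (((d12 x).mul (dQ x)).mul (hasDeriv_tr (d22 x)))
    have h2 := h1.congr_of_eventuallyEq (f₁ := fun _ => 0) (by
      filter_upwards [hev x] with s hs
      have := (blocks π hskew W₁ φ hpoisson (x, s • w) hs).2.1
      simp only [hDs] at this
      exact this.symm)
    have h3 := h2.unique (hasDerivAt_const _ _)
    simp only [Pi.mul_apply, zero_smul, e1, e2, Matrix.transpose_one, mul_zero, zero_mul, zero_add, add_zero,
      one_mul, mul_one] at h3
    change K12 x * π x + A x * π x * (K21 x)ᵀ + (K11 x * π x * (B x)ᵀ + π x * (K22 x)ᵀ)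
      + A x * Q x * (B x)ᵀ = 0 at h3
    have r := (hrel x).2.1
    have r1 : A x * π x = -(π x * (B x)ᵀ) := eq_neg_of_add_eq_zero_left r
    have r2 : π x * (B x)ᵀ = -(A x * π x) := eq_neg_of_add_eq_zero_right r
    have h4 : A x * π x * (K21 x)ᵀ = -(π x * (B x)ᵀ) * (K21 x)ᵀ := by rw [r1]
    have h5 : K11 x * π x * (B x)ᵀ = -(K11 x * A x * π x) := by
      rw [mul_assoc, r2, mul_neg, mul_assoc]
    rw [h4, h5] at h3
    rw [← sub_eq_zero, ← h3]
    noncomm_ring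
  have q5 : ∀ x, B x * Q x * (A x)ᵀ =
      (K21 x * B x - K22 x) * π x + π x * ((A x)ᵀ * (K11 x)ᵀ - (K12 x)ᵀ) := by
    intro x
    obtain ⟨e1, e2⟩ := Jdiag φ hφ hdiag x
    have h1 := ((((d22 x).mul_const (π x)).mul (hasDeriv_tr (d11 x))).add
      (((d21 x).mul_const (π x)).mul (hasDeriv_tr (d12 x)))).add
      (((d22 x).mul (dQ x)).mul (hasDeriv_tr (d12 x)))
    have h2 := h1.congr_of_eventuallyEq (f₁ := fun _ => 0) (by
      filter_upwards [hev x] with s hs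
      have := (blocks π hskew W₁ φ hpoisson (x, s • w) hs).2.2
      simp only [hDs] at this
      exact this.symm)
    have h3 := h2.unique (hasDerivAt_const _ _)
    simp only [Pi.mul_apply, zero_smul, e1, e2, Matrix.transpose_one, mul_zero, zero_mul, zero_add, add_zero,
      one_mul, mul_one] at h3
    change K22 x * π x + B x * π x * (K11 x)ᵀ + (K21 x * π x * (A x)ᵀ + π x * (K12 x)ᵀ)
      + B x * Q x * (A x)ᵀ = 0 at h3
    have r := (hrel x).2.2
    have r1 : B x * π x = -(π x * (A x)ᵀ) := eq_neg_of_add_eq_zero_left r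
    have r2 : π x * (A x)ᵀ = -(B x * π x) := eq_neg_of_add_eq_zero_right r
    have h4 : B x * π x * (K11 x)ᵀ = -(π x * (A x)ᵀ) * (K11 x)ᵀ := by rw [r1]
    have h5 : K21 x * π x * (A x)ᵀ = -(K21 x * B x * π x) := by
      rw [mul_assoc, r2, mul_neg, mul_assoc]
    rw [h4, h5] at h3
    rw [← sub_eq_zero, ← h3]
    noncomm_ring
  have cA := sA.cont
  have cB := sB.cont
  have cA2 : Continuous fun x => (A x)ᵀ := cA.matrix_transpose
  have cB2 : Continuous fun x => (B x)ᵀ := cB.matrix_transpose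
  have cDA := sA.contDD w
  have cDB := sB.contDD w
  have c11 : Continuous K11 := (s11.contDD w').comp hins.continuous
  have c12 : Continuous K12 := (s12.contDD w').comp hins.continuous
  have c21 : Continuous K21 := (s21.contDD w').comp hins.continuous
  have c22 : Continuous K22 := (s22.contDD w').comp hins.continuous
  obtain ⟨E, hE, F, hF, h⟩ := alg_core
    (continuousSubring (Fin n → ℝ) (Matrix (Fin n) (Fin n) ℝ)) π A B
    (fun x => (A x)ᵀ) (fun x => (B x)ᵀ) Q cA cB2 cA2 cB
    (funext fun x => (hrel x).2.1) (funext fun x => (hrel x).2.2)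
    ⟨_, cDA.neg, _, cDB.matrix_transpose.neg, funext q1⟩
    ⟨_, cDB.neg, _, cDA.matrix_transpose.neg, funext q2⟩
    ⟨_, cDA.neg, _, cDA.matrix_transpose.neg, funext q3⟩
    ⟨_, (c11.mul cA).sub c12, _, (cB2.mul c21.matrix_transpose).sub c22.matrix_transpose, funext q4⟩
    ⟨_, (c21.mul cB).sub c22, _, (cA2.mul c11.matrix_transpose).sub c12.matrix_transpose, funext q5⟩
  exact ⟨E, F, hE, hF, fun x => congrFun h x⟩
end

theorem stmt11 {n : ℕ} (π : (Fin n → ℝ) → Matrix (Fin n) (Fin n) ℝ)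
    (hsmooth : ∀ i j, ContDiff ℝ (⊤ : ℕ∞) fun x => π x i j)
    (hskew : ∀ x, (π x)ᵀ = -(π x))
    (hjac : ∀ (x : Fin n → ℝ) (i j k : Fin n),
      ∑ l, (π x l i * fderiv ℝ (fun z => π z j k) x (Pi.single l 1)
        + π x l j * fderiv ℝ (fun z => π z k i) x (Pi.single l 1)
        + π x l k * fderiv ℝ (fun z => π z i j) x (Pi.single l 1)) = 0)
    (W₁ W₂ : Set ((Fin n → ℝ) × (Fin n → ℝ)))
    (hW₁ : IsOpen W₁) (hW₂ : IsOpen W₂)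
    (hzero : ∀ x : Fin n → ℝ, (x, (0 : Fin n → ℝ)) ∈ W₁)
    (φ ψ : (Fin n → ℝ) × (Fin n → ℝ) → (Fin n → ℝ) × (Fin n → ℝ))
    (hφ : ContDiff ℝ (⊤ : ℕ∞) φ) (hψ : ContDiff ℝ (⊤ : ℕ∞) ψ)
    (hψφ : ∀ p ∈ W₁, ψ (φ p) = p) (hφψ : ∀ p ∈ W₂, φ (ψ p) = p)
    (himg : φ '' W₁ = W₂)
    (hdiag : ∀ x : Fin n → ℝ, φ (x, 0) = (x, x))
    (hpoisson : ∀ p ∈ W₁, Jmat φ p * pilin π p * (Jmat φ p)ᵀ = Pprod π (φ p)) :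
    ∀ x : Fin n → ℝ, ∃ N ∈ nhds x, ∀ y ∈ N, (π y).rank = (π x).rank := by
  have hS := fun l => main_S π hsmooth hskew W₁ hW₁ hzero φ hφ hdiag hpoisson (Pi.single l 1)
  choose E F hE hF hEF using hS
  have hπ : ES π := hsmooth
  intro x₀
  obtain ⟨C, hC0, hC⟩ : ∃ C : ℝ, 0 < C ∧ ∀ᶠ y in nhds x₀, ∀ l, ‖E l y‖ ≤ C ∧ ‖F l y‖ ≤ C := by
    refine ⟨∑ l, (‖E l x₀‖ + ‖F l x₀‖) + 1, by positivity, ?_⟩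
    refine Filter.eventually_all.2 fun l => ?_
    have hle : ‖E l x₀‖ + ‖F l x₀‖ ≤ ∑ l, (‖E l x₀‖ + ‖F l x₀‖) :=
      Finset.single_le_sum (f := fun l => ‖E l x₀‖ + ‖F l x₀‖) (fun _ _ => by positivity)
        (Finset.mem_univ l)
    have hn1 := norm_nonneg (E l x₀)
    have hn2 := norm_nonneg (F l x₀)
    have e1 := (hE l).norm.continuousAt.eventually_lt (x₀ := x₀)
      (continuousAt_const (y := ∑ l, (‖E l x₀‖ + ‖F l x₀‖) + 1)) (by linarith)
    have e2 := (hF l).norm.continuousAt.eventually_lt (x₀ := x₀)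
      (continuousAt_const (y := ∑ l, (‖E l x₀‖ + ‖F l x₀‖) + 1)) (by linarith)
    filter_upwards [e1, e2] with y h1 h2
    exact ⟨h1.le, h2.le⟩
  obtain ⟨δ, hδ, hball⟩ := Metric.eventually_nhds_iff_ball.1 hC
  set u : ℝ := ‖(1 : Matrix (Fin n) (Fin n) ℝ)‖ + 1 with hu
  have hu0 : 0 < u := by positivity
  set L : ℝ := 1 / u with hLdef
  have hL0 : 0 < L := by positivity
  set ε : ℝ := min δ (L / (2 * (n + 1) * C)) with hε
  have hε0 : 0 < ε := lt_min hδ (by positivity)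
  have key : ∀ x ∈ Metric.ball x₀ ε, ∀ y ∈ Metric.ball x₀ ε, (π y).rank ≤ (π x).rank := by
    intro x hx y hy
    set w := y - x with hw
    have hwn : ‖w‖ ≤ 2 * ε := by
      rw [hw, ← dist_eq_norm]
      have := dist_triangle_right y x x₀
      have h1 := Metric.mem_ball.1 hx
      have h2 := Metric.mem_ball.1 hy
      linarith
    have hseg : ∀ t ∈ Set.Icc (0 : ℝ) 1, x + t • w ∈ Metric.ball x₀ δ := by
      intro t ht
      have h1 : x + t • w ∈ Metric.ball x₀ ε := by
        refine (convex_ball x₀ ε).segment_subset hx hy ?_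
        rw [segment_eq_image']
        exact ⟨t, ht, rfl⟩
      exact Metric.ball_subset_ball (min_le_left _ _) h1
    have hbd : ∀ G : Fin n → (Fin n → ℝ) → Matrix (Fin n) (Fin n) ℝ, ∀ z,
        (∀ l, ‖G l z‖ ≤ C) → ‖∑ l, w l • G l z‖ ≤ L := by
      intro G z hG
      calc ‖∑ l, w l • G l z‖ ≤ ∑ l : Fin n, ‖w‖ * C := by
            refine norm_sum_le_of_le _ fun l _ => ?_
            rw [norm_smul]
            exact mul_le_mul (norm_le_pi_norm w l) (hG l) (norm_nonneg _) (norm_nonneg _)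
        _ = n * (‖w‖ * C) := by simp
        _ ≤ (n + 1) * ((2 * (L / (2 * (n + 1) * C))) * C) := by
            have : ‖w‖ ≤ 2 * (L / (2 * (n + 1) * C)) :=
              hwn.trans (by gcongr; exact min_le_right _ _)
            gcongr
            linarith
        _ = L := by field_simp
    have hline : Continuous fun t : ℝ => x + t • w := by fun_prop
    obtain ⟨g, h, hgh⟩ := ode_core (fun t : ℝ => π (x + t • w))
      (fun t => ∑ l, w l • E l (x + t • w)) (fun t => ∑ l, w l • F l (x + t • w)) L hL0.le
      (by rw [hLdef, ← hu]; field_simp; rfl)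
      (continuous_finsetSum _ fun l _ => ((hE l).comp hline).const_smul (w l))
      (continuous_finsetSum _ fun l _ => ((hF l).comp hline).const_smul (w l))
      (fun t ht => hbd E _ fun l => (hball _ (hseg t ht) l).1)
      (fun t ht => hbd F _ fun l => (hball _ (hseg t ht) l).2)
      (fun t => by
        have h1 := hπ.hasDeriv x w t
        refine h1.congr_deriv ?_
        have h2 : ∀ z, DD π w z = ∑ l, w l • DD π (Pi.single l 1) z := by
          intro z
          ext i j
          have : w = ∑ l, w l • (Pi.single l 1 : Fin n → ℝ) := by
            simpa using pi_eq_sum_univ' w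
          simp only [DD, Matrix.of_apply, Matrix.sum_apply, Matrix.smul_apply]
          conv_lhs => rw [this]
          simp only [map_sum, map_smul]
        rw [h2]
        simp only [hEF, smul_add, Finset.sum_add_distrib, Finset.sum_mul, Finset.mul_sum,
          smul_mul_assoc, mul_smul_comm])
    have hy1 : x + (1 : ℝ) • w = y := by simp [hw]
    simp only [hy1, zero_smul, add_zero] at hgh
    rw [hgh]
    exact (Matrix.rank_mul_le_left _ _).trans (Matrix.rank_mul_le_right _ _)
  have hx₀ := Metric.mem_ball_self (x := x₀) hε0
  exact ⟨Metric.ball x₀ ε, Metric.ball_mem_nhds _ hε0,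
    fun y hy => le_antisymm (key _ hx₀ y hy) (key y hy _ hx₀)⟩
end

section
/- Let c : Fin n → Fin n → Fin n → ℝ be the structure constants of a real Lie algebra, i.e. c i j k = -(c j i k) for all i, j, k, and ∑ m, (c i j m * c m k l + c j k m * c m i l + c k i m * c m j l) = 0 for all i, j, k, l, and let π be the associated Lie–Poisson bivector field on ℝⁿ, π x i j = ∑ k, c i j k * x k. Then π is linearizable around the diagonal — meaning there exist open sets W₁, W₂ ⊆ (Fin n → ℝ) × (Fin n → ℝ) with (x,0) ∈ W₁ for all x, and smooth maps φ, ψ with ψ ∘ φ = id on W₁, φ ∘ ψ = id on W₂, φ '' W₁ = W₂, φ (x,0) = (x,x) for all x, and J p * πlin p * (J p)ᵀ = Π (φ p) for all p ∈ W₁ — if and only if c i j k = 0 for all i, j, k (i.e. the Lie algebra is abelian). -/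
open scoped Matrix

/-- The Lie–Poisson bivector field on `ℝⁿ` associated to structure constants `c`. -/
noncomputable def liePoisson {n : ℕ} (c : Fin n → Fin n → Fin n → ℝ)
    (x : Fin n → ℝ) : Matrix (Fin n) (Fin n) ℝ :=
  Matrix.of fun i j => ∑ k, c i j k * x k

lemma aux_fd {n : ℕ} (c : Fin n → Fin n → Fin n → ℝ) (x v : Fin n → ℝ) (i j : Fin n) :
    fderiv ℝ (fun z => liePoisson c z i j) x v = liePoisson c v i j := by
  have h : HasFDerivAt (fun z : Fin n → ℝ => liePoisson c z i j)
      (∑ k, c i j k • (ContinuousLinearMap.proj k : (Fin n → ℝ) →L[ℝ] ℝ)) x := by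
    have h0 := (∑ k, c i j k • (ContinuousLinearMap.proj k : (Fin n → ℝ) →L[ℝ] ℝ)).hasFDerivAt
      (x := x)
    refine h0.congr_of_eventuallyEq (Filter.Eventually.of_forall fun z => ?_)
    simp [liePoisson]
  rw [h.fderiv]
  simp [liePoisson]

lemma aux_smul {n : ℕ} (c : Fin n → Fin n → Fin n → ℝ) (t : ℝ) (x : Fin n → ℝ) :
    liePoisson c (t • x) = t • liePoisson c x := by
  ext i j
  simp only [liePoisson, Matrix.of_apply, Pi.smul_apply, smul_eq_mul, Matrix.smul_apply,
    Finset.mul_sum]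
  exact Finset.sum_congr rfl fun k _ => by ring

lemma aux_pilin {n : ℕ} (c : Fin n → Fin n → Fin n → ℝ)
    (hskew : ∀ i j k, c i j k = -(c j i k)) (p : (Fin n → ℝ) × (Fin n → ℝ)) :
    pilin (liePoisson c) p
      = Matrix.fromBlocks 0 (liePoisson c p.1) (liePoisson c p.1) (liePoisson c p.2) := by
  unfold pilin
  congr 1
  · ext i j
    simp only [liePoisson, Matrix.neg_apply, Matrix.transpose_apply, Matrix.of_apply,
      ← Finset.sum_neg_distrib]
    exact Finset.sum_congr rfl fun k _ => by rw [hskew j i k]; ring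
  · ext i j
    exact aux_fd c _ _ i j

lemma aux_alg {n : ℕ} (P B D : Matrix (Fin n) (Fin n) ℝ) (hP : Pᵀ = -P)
    (h1 : B * P + P * Bᵀ = P) (h3 : B * P + P * Dᵀ = 0) (h4 : B * P * Dᵀ = 0) : P = 0 := by
  have e1 : P * Dᵀ = P * Bᵀ - P := by
    rw [eq_sub_iff_add_eq]
    nth_rewrite 2 [← h1]
    rw [← add_assoc, add_comm (P * Dᵀ), h3, zero_add]
  have e2 : B * P * Bᵀ = B * P := by
    rw [Matrix.mul_assoc, e1, Matrix.mul_sub, sub_eq_zero] at h4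
    rw [Matrix.mul_assoc, h4]
  have e3 : B * P * Bᵀ = P * Bᵀ := by
    have := congrArg Matrix.transpose e2
    simp only [Matrix.transpose_mul, Matrix.transpose_transpose, hP] at this
    simpa [Matrix.mul_assoc] using this
  have e4 : P * Bᵀ = B * P := by rw [← e3, e2]
  have e5 : P = (2 : ℝ) • (B * P) := by
    rw [two_smul]; nth_rewrite 1 [← h1]; rw [e4]
  have e6 : B * P = (2 : ℝ) • (B * P) := by
    have : P * Bᵀ = (2 : ℝ) • (B * P * Bᵀ) := by
      nth_rewrite 1 [e5]; rw [Matrix.smul_mul]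
    rwa [e2, e4] at this
  have e7 : B * P = 0 := by
    rw [two_smul] at e6
    simpa using e6
  rw [e5, e7, smul_zero]

lemma aux_Jcont {n : ℕ} (φ : (Fin n → ℝ) × (Fin n → ℝ) → (Fin n → ℝ) × (Fin n → ℝ))
    (h : ContDiff ℝ (⊤ : ℕ∞) φ) : Continuous (Jmat φ) := by
  have hc : Continuous (fderiv ℝ φ) := h.continuous_fderiv (by simp)
  refine continuous_matrix fun l m => ?_
  have hm : Continuous fun p => fderiv ℝ φ p (basisVec m) := hc.clm_apply continuous_const
  rcases l with i | i
  · exact (continuous_apply i).comp (continuous_fst.comp hm)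
  · exact (continuous_apply i).comp (continuous_snd.comp hm)

lemma aux_J0 {n : ℕ} (φ : (Fin n → ℝ) × (Fin n → ℝ) → (Fin n → ℝ) × (Fin n → ℝ))
    (h : ContDiff ℝ (⊤ : ℕ∞) φ) (hφ : ∀ x : Fin n → ℝ, φ (x, 0) = (x, x)) :
    Jmat φ 0 = Matrix.fromBlocks 1 (Jmat φ 0).toBlocks₁₂ 1 (Jmat φ 0).toBlocks₂₂ := by
  have hd : HasFDerivAt φ (fderiv ℝ φ 0) ((0 : Fin n → ℝ), (0 : Fin n → ℝ)) :=
    (h.differentiable (by simp) 0).hasFDerivAt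
  have h1 : HasFDerivAt (fun x : Fin n → ℝ => φ (x, 0))
      ((fderiv ℝ φ 0).comp (ContinuousLinearMap.inl ℝ (Fin n → ℝ) (Fin n → ℝ))) 0 :=
    HasFDerivAt.comp (0 : Fin n → ℝ) hd
      (ContinuousLinearMap.inl ℝ (Fin n → ℝ) (Fin n → ℝ)).hasFDerivAt
  have h2 : HasFDerivAt (fun x : Fin n → ℝ => φ (x, 0))
      ((ContinuousLinearMap.id ℝ (Fin n → ℝ)).prod (ContinuousLinearMap.id ℝ (Fin n → ℝ))) 0 := by
    simp only [hφ]
    exact (hasFDerivAt_id _).prodMk (hasFDerivAt_id _)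
  have h3 := h1.unique h2
  have h4 : ∀ x : Fin n → ℝ, fderiv ℝ φ 0 (x, 0) = (x, x) := fun x => by
    simpa using congrArg (fun L => L x) h3
  conv_lhs => rw [← Matrix.fromBlocks_toBlocks (Jmat φ 0)]
  congr 1 <;>
  · ext i j
    simp [Matrix.toBlocks₁₁, Matrix.toBlocks₂₁, Jmat, basisVec, h4, Matrix.one_apply,
      Pi.single_apply]

theorem stmt12 {n : ℕ} (c : Fin n → Fin n → Fin n → ℝ)
    (hskew : ∀ i j k, c i j k = -(c j i k))
    (hjacobi : ∀ i j k l,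
      ∑ m, (c i j m * c m k l + c j k m * c m i l + c k i m * c m j l) = 0) :
    (∃ W₁ W₂ : Set ((Fin n → ℝ) × (Fin n → ℝ)),
      IsOpen W₁ ∧ IsOpen W₂ ∧ (∀ x : Fin n → ℝ, (x, (0 : Fin n → ℝ)) ∈ W₁) ∧
      ∃ φ ψ : (Fin n → ℝ) × (Fin n → ℝ) → (Fin n → ℝ) × (Fin n → ℝ),
        ContDiff ℝ (⊤ : ℕ∞) φ ∧ ContDiff ℝ (⊤ : ℕ∞) ψ ∧
        (∀ p ∈ W₁, ψ (φ p) = p) ∧ (∀ p ∈ W₂, φ (ψ p) = p) ∧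
        φ '' W₁ = W₂ ∧ (∀ x : Fin n → ℝ, φ (x, 0) = (x, x)) ∧
        (∀ p ∈ W₁, Jmat φ p * pilin (liePoisson c) p * (Jmat φ p)ᵀ
          = Pprod (liePoisson c) (φ p))) ↔
    (∀ i j k, c i j k = 0) := by
  constructor
  · rintro ⟨W₁, W₂, hW₁, -, hmem, φ, ψ, hφ, -, -, -, -, hdiag, hJ⟩
    have key : ∀ p : (Fin n → ℝ) × (Fin n → ℝ),
        ∀ᶠ t in nhdsWithin (0 : ℝ) {0}ᶜ,
          t • (Jmat φ (t • p) * pilin (liePoisson c) p * (Jmat φ (t • p))ᵀ)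
            = Pprod (liePoisson c) (φ (t • p)) := by
      intro p
      have hc : Continuous fun t : ℝ => t • p := by fun_prop
      have h0 : ∀ᶠ t in nhds (0 : ℝ), t • p ∈ W₁ :=
        hc.continuousAt.eventually (by
          simp only [zero_smul]; exact hW₁.mem_nhds (hmem 0))
      filter_upwards [nhdsWithin_le_nhds h0] with t ht
      rw [← hJ _ ht]
      have : pilin (liePoisson c) (t • p) = t • pilin (liePoisson c) p := by
        rw [aux_pilin c hskew, aux_pilin c hskew, Matrix.fromBlocks_smul]
        simp [aux_smul]
      rw [this]
      simp
    have hcont : ∀ p : (Fin n → ℝ) × (Fin n → ℝ), Filter.Tendsto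
        (fun t : ℝ => Jmat φ (t • p) * pilin (liePoisson c) p * (Jmat φ (t • p))ᵀ)
        (nhdsWithin (0 : ℝ) {0}ᶜ)
        (nhds (Jmat φ 0 * pilin (liePoisson c) p * (Jmat φ 0)ᵀ)) := by
      intro p
      have hc : Continuous fun t : ℝ => Jmat φ (t • p) :=
        (aux_Jcont φ hφ).comp (by fun_prop)
      have h2 : Continuous fun t : ℝ =>
          Jmat φ (t • p) * pilin (liePoisson c) p * (Jmat φ (t • p))ᵀ :=
        (hc.matrix_mul continuous_const).matrix_mul hc.matrix_transpose
      have h3 := h2.tendsto 0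
      simp only [zero_smul] at h3
      exact h3.mono_left nhdsWithin_le_nhds
    have hTR : ∀ p : (Fin n → ℝ) × (Fin n → ℝ),
        (Jmat φ 0 * pilin (liePoisson c) p * (Jmat φ 0)ᵀ).toBlocks₁₂ = 0 := by
      intro p
      ext i j
      have h1 := ((continuous_id.matrix_elem (Sum.inl i) (Sum.inr j)).tendsto _).comp (hcont p)
      refine tendsto_nhds_unique (h1.congr' ?_) tendsto_const_nhds
      filter_upwards [key p, self_mem_nhdsWithin] with t ht ht0
      have h := congrFun (congrFun ht (Sum.inl i)) (Sum.inr j)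
      rw [Matrix.smul_apply, smul_eq_mul] at h
      have h' : Pprod (liePoisson c) (φ (t • p)) (Sum.inl i) (Sum.inr j) = 0 := rfl
      rw [h'] at h
      exact (mul_eq_zero.mp h).resolve_left ht0
    have hTL : ∀ x : Fin n → ℝ,
        (Jmat φ 0 * pilin (liePoisson c) (x, 0) * (Jmat φ 0)ᵀ).toBlocks₁₁ = liePoisson c x := by
      intro x
      ext i j
      have h1 := ((continuous_id.matrix_elem (Sum.inl i) (Sum.inl j)).tendsto _).comp
        (hcont (x, 0))
      refine tendsto_nhds_unique (h1.congr' ?_) tendsto_const_nhds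
      filter_upwards [key (x, 0), self_mem_nhdsWithin] with t ht ht0
      have h := congrFun (congrFun ht (Sum.inl i)) (Sum.inl j)
      rw [Matrix.smul_apply, smul_eq_mul] at h
      have h' : Pprod (liePoisson c) (φ (t • (x, 0))) (Sum.inl i) (Sum.inl j)
          = t * liePoisson c x i j := by
        rw [Prod.smul_mk, smul_zero, hdiag]
        simp [Pprod, aux_smul]
      rw [h'] at h
      exact mul_left_cancel₀ ht0 h
    have hz : ∀ x : Fin n → ℝ, liePoisson c x = 0 := by
      intro x
      have a1 := hTL x
      have a3 := hTR (x, 0)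
      have a4 := hTR (0, x)
      have z : liePoisson c 0 = 0 := by ext i j; simp [liePoisson]
      rw [aux_J0 φ hφ hdiag, aux_pilin c hskew, Matrix.fromBlocks_transpose,
        Matrix.fromBlocks_multiply, Matrix.fromBlocks_multiply] at a1 a3 a4
      simp only [Matrix.toBlocks_fromBlocks₁₁, Matrix.toBlocks_fromBlocks₁₂, z,
        Matrix.mul_zero, Matrix.zero_mul, zero_add, add_zero, Matrix.one_mul, Matrix.mul_one,
        Matrix.transpose_one] at a1 a3 a4
      refine aux_alg _ _ _ ?_ a1 a3 a4
      ext i j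
      simp only [liePoisson, Matrix.neg_apply, Matrix.transpose_apply, Matrix.of_apply,
        ← Finset.sum_neg_distrib]
      exact Finset.sum_congr rfl fun k _ => by rw [hskew j i k]; ring
    intro i j k
    simpa [liePoisson, Pi.single_apply] using
      congrFun (congrFun (hz (Pi.single k 1)) i) j
  · intro hc
    have z : ∀ x, liePoisson c x = 0 := fun x => by ext i j; simp [liePoisson, hc]
    refine ⟨Set.univ, Set.univ, isOpen_univ, isOpen_univ, fun _ => trivial,
      fun p => (p.1, p.1 + p.2), fun p => (p.1, p.2 - p.1), by fun_prop, by fun_prop,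
      fun p _ => by simp, fun p _ => by simp, ?_, fun x => by simp, fun p _ => ?_⟩
    · rw [Set.image_univ, Set.range_eq_univ]
      exact fun p => ⟨(p.1, p.2 - p.1), by simp⟩
    · rw [aux_pilin c hskew]
      simp [Pprod, z]
end
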